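/- (Functoriality, relevance is preserved.) Let A and B be commutative rings graded by the same abelian group M, and let Ψ : A → B be a ring homomorphism respecting the gradings (Ψ(𝒜_m) ⊆ ℬ_m for all m ∈ M). If f = {a_i}_{i∈I} is a relevant family of homogeneous elements of A and each Ψ(a_i) is nonzero as are all images of homogeneous divisors involved (i.e., Ψ maps nonzero homogeneous divisors of the a_i to nonzero elements), then the family Ψ(f) = {Ψ(a_i)}_{i∈I} is a relevant family of homogeneous elements of B. -/

import Mathlib

/-!
Statement 10 (Functoriality, relevance is preserved): if `Ψ : A → B` is a
grading-preserving ring homomorphism between `M`-graded rings which maps the nonzero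
homogeneous divisors of the members of a relevant family `f` to nonzero elements,
then the image family `Ψ ∘ f` is relevant in `B`.
-/

/-- The set of degrees of homogeneous divisors of members of the family `f`. -/
def divisorDegrees {M A I : Type*} [AddCommGroup M] [CommRing A]
    (𝒜 : M → AddSubgroup A) (f : I → A) : Set M :=
  {m | ∃ x : A, x ≠ 0 ∧ x ∈ 𝒜 m ∧ ∃ i, x ∣ f i}

/-- A family `f` of homogeneous elements of an `M`-graded ring is *relevant* if every
`x ∈ M` has a positive multiple lying in the subgroup of `M` generated by the degrees
of the homogeneous divisors of members of `f`. -/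
def IsRelevant {M A I : Type*} [AddCommGroup M] [CommRing A]
    (𝒜 : M → AddSubgroup A) (f : I → A) : Prop :=
  ∀ x : M, ∃ n : ℕ, 0 < n ∧ n • x ∈ AddSubgroup.closure (divisorDegrees 𝒜 f)

section

variable {M A B I J F : Type*} [AddCommGroup M] [CommRing A] [CommRing B]
  {𝒜 : M → AddSubgroup A} {ℬ : M → AddSubgroup B} {f : I → A}

theorem IsRelevant.of_divisorDegrees_subset {g : J → B} (hrel : IsRelevant 𝒜 f)
    (hsub : divisorDegrees 𝒜 f ⊆ divisorDegrees ℬ g) : IsRelevant ℬ g := fun x =>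
  let ⟨n, hn, hx⟩ := hrel x
  ⟨n, hn, AddSubgroup.closure_mono hsub hx⟩

variable [FunLike F A B] [MulHomClass F A B]

theorem divisorDegrees_subset_divisorDegrees_map (Ψ : F) (hΨ : ∀ m, ∀ a ∈ 𝒜 m, Ψ a ∈ ℬ m)
    (hΨ0 : ∀ x : A, x ≠ 0 → (∃ m, x ∈ 𝒜 m) → (∃ i, x ∣ f i) → Ψ x ≠ 0) :
    divisorDegrees 𝒜 f ⊆ divisorDegrees ℬ (fun i => Ψ (f i)) := by
  rintro m ⟨x, hx0, hxm, i, hxi⟩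
  exact ⟨Ψ x, hΨ0 x hx0 ⟨m, hxm⟩ ⟨i, hxi⟩, hΨ m x hxm, i, map_dvd Ψ hxi⟩

theorem isRelevant_map_of_isRelevant_general (Ψ : F) (hΨ : ∀ m, ∀ a ∈ 𝒜 m, Ψ a ∈ ℬ m)
    (hrel : IsRelevant 𝒜 f)
    (hΨ0 : ∀ x : A, x ≠ 0 → (∃ m, x ∈ 𝒜 m) → (∃ i, x ∣ f i) → Ψ x ≠ 0) :
    IsRelevant ℬ (fun i => Ψ (f i)) :=
  hrel.of_divisorDegrees_subset (divisorDegrees_subset_divisorDegrees_map Ψ hΨ hΨ0)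

end

theorem isRelevant_map_of_isRelevant
    {M A B I : Type*} [AddCommGroup M] [DecidableEq M] [CommRing A] [CommRing B]
    (𝒜 : M → AddSubgroup A) [GradedRing 𝒜]
    (ℬ : M → AddSubgroup B) [GradedRing ℬ]
    (Ψ : A →+* B) (hΨ : ∀ m, ∀ a ∈ 𝒜 m, Ψ a ∈ ℬ m)
    (f : I → A)
    (hf : ∀ i, f i ≠ 0 ∧ ∃ m, f i ∈ 𝒜 m)
    (hrel : IsRelevant 𝒜 f)
    (hΨ0 : ∀ x : A, x ≠ 0 → (∃ m, x ∈ 𝒜 m) → (∃ i, x ∣ f i) → Ψ x ≠ 0) :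
    IsRelevant ℬ (fun i => Ψ (f i)) :=
  isRelevant_map_of_isRelevant_general Ψ hΨ hrel hΨ0
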